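/- Let w₁,…,wₙ be positive integers and let T be a positive integer with T ≤ Σᵢ wᵢ. Define w'ᵢ = 6wᵢ for all i, T' = 6T, σ = ⌈log₂(T' + Σᵢ w'ᵢ)⌉ + 2, T'' = 2^σ, u = ⌊(T'' − T')/2⌋ and w̄ = ⌈(T'' − T')/2⌉, and let W'' be the multiset {w'₁,…,w'ₙ, u, w̄}. Then: (i) some sub-multiset of W'' sums to T'' if and only if some subset of {w₁,…,wₙ} sums to T; (ii) T'' is a power of 2 and T'' = 2^σ with σ ≥ 3; (iii) every element of W'' lies in the interval [2, T''/2); and (iv) every element of W'' differs by at least 2 from every power of 2. -/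

import Mathlib

/-!
Write `P` for the least power of two that is at least `6T + Σ 6wᵢ`, so `T'' = 4P`. Since `T''` and
`6T` are even, the two padding elements coincide: `u = w̄ = 2P - 3T`.
The elements `6wᵢ` add up to at most `P`, hence together with at most one copy of `u` they stay
below `T''`. A sub-multiset with sum `T''` therefore uses both copies of `u` (three are not
available), and its other elements add up to `4P - 2(2P - 3T) = 6T`.

For the distance to powers of two: `6wᵢ` is a multiple of `6`, while `2 ^ j` is `2` or `4` modulo
`6` for `j ≥ 1` (and `6wᵢ ≥ 6` takes care of `2 ^ 0`); and `u` lies strictly between the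
consecutive powers `P` and `2P`, at distance at least `3T` from each because `12T ≤ P`.
-/

/-- A sub-multiset of an image is the image of a sub-multiset, also for non-injective maps. -/
lemma exists_le_map_eq_of_le_map {α β : Type*} (f : α → β) (s : Multiset α) :
    ∀ M : Multiset β, M ≤ s.map f → ∃ t ≤ s, t.map f = M := by
  classical
  induction s using Multiset.induction_on with
  | empty =>
    intro M hM
    exact ⟨0, le_rfl, by simpa [eq_comm] using hM⟩
  | cons a s ih =>
    intro M hM
    rw [Multiset.map_cons] at hM
    by_cases ha : f a ∈ M
    · obtain ⟨M', rfl⟩ := Multiset.exists_cons_of_mem ha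
      obtain ⟨t, ht, rfl⟩ := ih M' ((Multiset.cons_le_cons_iff _).1 hM)
      exact ⟨a ::ₘ t, Multiset.cons_le_cons _ ht, by simp⟩
    · obtain ⟨t, ht, rfl⟩ := ih M ((Multiset.le_cons_of_notMem ha).1 hM)
      exact ⟨t, ht.trans (Multiset.le_cons_self _ _), rfl⟩

lemma two_pow_mod_six (j : ℕ) : 2 ^ (j + 1) % 6 = 2 ∨ 2 ^ (j + 1) % 6 = 4 := by
  induction j with
  | zero => simp
  | succ j ih => rw [pow_succ]; omega

lemma two_le_dist_six_mul (a j : ℕ) (ha : 0 < a) : 2 ≤ |((6 * a : ℕ) : ℤ) - 2 ^ j| := by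
  have h : ((2 ^ j : ℕ) : ℤ) = 2 ^ j := by push_cast; rfl
  rw [← h, le_abs]
  cases j with
  | zero => left; push_cast; omega
  | succ j =>
    have := two_pow_mod_six j
    generalize 2 ^ (j + 1) = q at *
    omega

/-- A number at distance at least `2` from two consecutive powers of two, and lying between them,
is at distance at least `2` from all powers of two. -/
lemma two_le_dist_of_between (x c j : ℕ) (h₁ : 2 ^ c + 2 ≤ x) (h₂ : x + 2 ≤ 2 ^ (c + 1)) :
    2 ≤ |(x : ℤ) - 2 ^ j| := by
  have h : ((2 ^ j : ℕ) : ℤ) = 2 ^ j := by push_cast; rfl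
  rw [← h, le_abs]
  rcases Nat.lt_or_ge c j with hj | hj
  · have := Nat.pow_le_pow_right (n := 2) (by norm_num) (Nat.succ_le_of_lt hj)
    rw [Nat.succ_eq_add_one] at this
    right; omega
  · have := Nat.pow_le_pow_right (n := 2) (by norm_num) hj
    left; omega


/-- The reduction underlying Lemma 1: given positive integer
weights `w₁,…,wₙ` and a positive target `T ≤ Σ wᵢ`, set `w'ᵢ = 6wᵢ`, `T' = 6T`,
`σ = ⌈log₂(T' + Σ w'ᵢ)⌉ + 2`, `T'' = 2^σ`, `u = ⌊(T''−T')/2⌋`,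
`w̄ = ⌈(T''−T')/2⌉`, and let `W''` be the multiset `{w'₁,…,w'ₙ, u, w̄}`.  Then:
(i) some sub-multiset of `W''` sums to `T''` iff some subset of `{w₁,…,wₙ}`
sums to `T`; (ii) `σ ≥ 3` (and `T'' = 2^σ` is a power of 2); (iii) every
element of `W''` lies in `[2, T''/2)`; (iv) every element of `W''` differs by
at least 2 from every power of 2. -/
theorem subset_sum_reduction (n : ℕ) (w : Fin n → ℕ) (hw : ∀ i, 0 < w i)
    (T : ℕ) (hT : 0 < T) (hTsum : T ≤ ∑ i, w i)
    (σ T'' u wbar : ℕ)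
    (hσ : σ = Nat.clog 2 (6 * T + ∑ i, 6 * w i) + 2)
    (hT'' : T'' = 2 ^ σ)
    (hu : u = (T'' - 6 * T) / 2)
    (hwbar : wbar = (T'' - 6 * T + 1) / 2)
    (W'' : Multiset ℕ)
    (hW'' : W'' = Multiset.map (fun i => 6 * w i) Finset.univ.val + {u, wbar}) :
    ((∃ M : Multiset ℕ, M ≤ W'' ∧ M.sum = T'') ↔
        (∃ S : Finset (Fin n), ∑ i ∈ S, w i = T)) ∧
      3 ≤ σ ∧
      (∀ x ∈ W'', 2 ≤ x ∧ 2 * x < T'') ∧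
      (∀ x ∈ W'', ∀ j : ℕ, 2 ≤ |(x : ℤ) - 2 ^ j|) := by
  classical
  set c := Nat.clog 2 (6 * T + ∑ i, 6 * w i) with hc
  have hP : 6 * T + ∑ i, 6 * w i ≤ 2 ^ c := Nat.le_pow_clog (by norm_num) _
  have hsum : ∑ i, 6 * w i = 6 * ∑ i, w i := (Finset.mul_sum _ _ _).symm
  have hTP : T'' = 4 * 2 ^ c := by rw [hT'', hσ, pow_add]; ring
  have hpow : 2 ^ (c + 1) = 2 * 2 ^ c := by ring
  have huP : u + 3 * T = 2 * 2 ^ c := by omega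
  have hwu : wbar = u := by omega
  have hc1 : 1 ≤ c := by
    by_contra h
    have h0 : c = 0 := by omega
    rw [h0, pow_zero] at hP
    omega
  have hwle : ∀ i, 6 * w i ≤ ∑ i, 6 * w i := fun i =>
    Finset.single_le_sum (f := fun i => 6 * w i) (fun _ _ => Nat.zero_le _) (Finset.mem_univ i)
  have hpair : ({u, wbar} : Multiset ℕ) = Multiset.replicate 2 u := by rw [hwu]; rfl
  have hmem : ∀ x ∈ W'', (∃ i, 6 * w i = x) ∨ x = u := by
    intro x hx
    rw [hW'', hpair, Multiset.mem_add] at hx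
    rcases hx with hx | hx
    · left; simpa using hx
    · right; exact Multiset.eq_of_mem_replicate hx
  refine ⟨⟨?_, ?_⟩, by omega, ?_, ?_⟩
  · rintro ⟨M, hM, hMsum⟩
    rw [hW'', hpair] at hM
    -- Take as many copies of `u` out of `M` as the padding can account for.
    obtain ⟨t, ht, hteq⟩ := exists_le_map_eq_of_le_map _ _ _ (tsub_le_iff_right.2 hM)
    obtain ⟨k, hk, hkeq⟩ := Multiset.le_replicate_iff.1
      (Multiset.inter_le_right (s := M) (t := Multiset.replicate 2 u))
    have htn : t.Nodup := Multiset.nodup_of_le ht Finset.univ.nodup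
    have hts : (t.map fun i => 6 * w i).sum = ∑ i ∈ (⟨t, htn⟩ : Finset (Fin n)), 6 * w i := rfl
    have hdec : ∑ i ∈ (⟨t, htn⟩ : Finset (Fin n)), 6 * w i + k * u = T'' := by
      rw [← hts, hteq, ← hMsum]
      conv_rhs => rw [← Multiset.sub_add_inter M (Multiset.replicate 2 u), hkeq]
      simp
    have hle : ∑ i ∈ (⟨t, htn⟩ : Finset (Fin n)), 6 * w i ≤ ∑ i, 6 * w i :=
      Finset.sum_le_sum_of_subset (Finset.subset_univ _)
    refine ⟨⟨t, htn⟩, ?_⟩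
    rw [← Finset.mul_sum] at hdec hle
    interval_cases k <;> omega
  · rintro ⟨S, hS⟩
    refine ⟨S.val.map (fun i => 6 * w i) + {u, wbar}, ?_, ?_⟩
    · rw [hW'']
      gcongr
      exact Finset.val_le_iff.2 S.subset_univ
    · have hs : (S.val.map fun i => 6 * w i).sum = 6 * T := by
        rw [← hS, Finset.mul_sum]; rfl
      rw [Multiset.sum_add, hs, hpair, Multiset.sum_replicate, smul_eq_mul]
      omega
  · intro x hx
    rcases hmem x hx with ⟨i, rfl⟩ | rfl
    · have := hw i
      have := hwle i
      omega
    · omega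
  · intro x hx j
    rcases hmem x hx with ⟨i, rfl⟩ | rfl
    · exact two_le_dist_six_mul _ _ (hw i)
    · exact two_le_dist_of_between _ c j (by omega) (by omega)
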